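/- arXiv:1207.3262 — 2 statements merged into one kernel-verified Lean document; each statement's English description precedes it below -/
import Mathlib

section
/- The canonizer can_AC solves the word problem for AC: fix a linear order ⊴ on ground terms; then for all ground terms s and t, can_AC(s) = can_AC(t) (syntactic equality) if and only if s =_AC t. -/
/-- Ground terms over uninterpreted symbols `F` (with arities `ar`) and AC symbols `U`:
`app f ts` applies `f : F` to a tuple of `ar f` terms, `node u t₁ t₂` is `u(t₁,t₂)`. -/
inductive T (F : Type) (ar : F → ℕ) (U : Type) : Type where
  | app : (f : F) → (Fin (ar f) → T F ar U) → T F ar U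
  | node : U → T F ar U → T F ar U → T F ar U

variable (F : Type) (ar : F → ℕ) (U : Type)

/-- `EqACE E s t` : the smallest congruence on ground terms containing AC-equalities
(commutativity and associativity of every AC symbol) and the pairs of `E`. -/
inductive EqACE (E : Set (T F ar U × T F ar U)) : T F ar U → T F ar U → Prop where
  | ax : ∀ {s t : T F ar U}, (s, t) ∈ E → EqACE E s t
  | refl : ∀ t : T F ar U, EqACE E t t
  | symm : ∀ {s t : T F ar U}, EqACE E s t → EqACE E t s
  | trans : ∀ {s t w : T F ar U}, EqACE E s t → EqACE E t w → EqACE E s w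
  | congr_app : ∀ (f : F) (ts ts' : Fin (ar f) → T F ar U),
      (∀ i, EqACE E (ts i) (ts' i)) → EqACE E (.app f ts) (.app f ts')
  | congr_node : ∀ (u : U) {s₁ t₁ s₂ t₂ : T F ar U}, EqACE E s₁ t₁ → EqACE E s₂ t₂ →
      EqACE E (.node u s₁ s₂) (.node u t₁ t₂)
  | comm : ∀ (u : U) (x y : T F ar U), EqACE E (.node u x y) (.node u y x)
  | assoc : ∀ (u : U) (x y z : T F ar U),
      EqACE E (.node u x (.node u y z)) (.node u (.node u x y) z)

/-- AC-equality `=_AC`: the smallest congruence containing the AC axioms. -/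
abbrev ACeq : T F ar U → T F ar U → Prop := EqACE F ar U ∅

open Classical in
/-- The multiset `𝒜_u(t)` of `u`-aliens of a term `t`. -/
noncomputable def aliens (u : U) : T F ar U → Multiset (T F ar U)
  | .node u' t₁ t₂ => if u' = u then aliens u t₁ + aliens u t₂ else {T.node u' t₁ t₂}
  | .app f ts => {T.app f ts}

/-- `comb1 u s₁ [s₂,…,sₙ]` is the right comb `u(s₁, u(s₂, …, u(s_{n-1}, sₙ)…))`. -/
def comb1 (u : U) : T F ar U → List (T F ar U) → T F ar U
  | t, [] => t
  | t, s :: ss => .node u t (comb1 u s ss)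

/-- The AC canonizer `can_AC` (w.r.t. the fixed linear order `⊴` on terms): under each AC
symbol `u` it collects the `u`-aliens of the canonized arguments, sorts them w.r.t. `⊴`
and rebuilds a right comb.  (The `[]` branch is unreachable: the multiset of aliens always
has at least two elements.) -/
noncomputable def canAC [LinearOrder (T F ar U)] : T F ar U → T F ar U
  | .app f ts => .app f (fun i => canAC (ts i))
  | .node u t₁ t₂ =>
      match (aliens F ar U u (canAC t₁) + aliens F ar U u (canAC t₂)).sort (· ≤ ·) with
      | [] => .node u (canAC t₁) (canAC t₂)
      | s :: ss => comb1 F ar U u s ss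

/-!
Call a map `f` from terms to a commutative monoid multiplicative at `u` if
`f (u(a,b)) = f a * f b`. Its value at a term is the product of its values at the `u`-aliens, and
its value at a right comb is the product over the entries, so sorting and rebuilding do not affect
it: `f (can u(a,b)) = f (can a) * f (can b)`. Two choices of `f` yield the two directions.

The map `𝒜_u`, with multiset addition, is one of them, so the multiset that determines
`can u(a,b)` is compatible with commutativity and associativity. Hence AC-equal terms have equal
canonical forms. The other is the class of a term modulo AC, in the commutative semigroup with
operation `u` and an adjoined unit. Hence every term is AC-equal to its canonical form.
-/

section

variable {F : Type} {ar : F → ℕ} {U : Type}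

theorem aliens_node_self (u : U) (a b : T F ar U) :
    aliens F ar U u (.node u a b) = aliens F ar U u a + aliens F ar U u b := by
  rw [aliens, if_pos rfl]

theorem aliens_node_of_ne {u v : U} (h : v ≠ u) (a b : T F ar U) :
    aliens F ar U u (.node v a b) = {.node v a b} := by
  rw [aliens, if_neg h]

theorem aliens_ne_zero (u : U) (t : T F ar U) : aliens F ar U u t ≠ 0 := by
  induction t with
  | app f ts => exact Multiset.singleton_ne_zero _
  | node v a b iha =>
    by_cases h : v = u
    · subst h
      rw [aliens_node_self]
      exact fun h₀ => iha (add_eq_zero.mp h₀).1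
    · rw [aliens_node_of_ne h]
      exact Multiset.singleton_ne_zero _

section Multiplicative

variable {M : Type*} [CommMonoid M] {u : U} {f : T F ar U → M}

@[to_additive]
theorem prod_map_aliens (hf : ∀ a b, f (.node u a b) = f a * f b) (t : T F ar U) :
    ((aliens F ar U u t).map f).prod = f t := by
  induction t with
  | app g ts => rw [aliens, Multiset.map_singleton, Multiset.prod_singleton]
  | node v a b iha ihb =>
    by_cases h : v = u
    · subst h
      rw [aliens_node_self, Multiset.map_add, Multiset.prod_add, iha, ihb, hf]
    · rw [aliens_node_of_ne h, Multiset.map_singleton, Multiset.prod_singleton]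

@[to_additive]
theorem map_comb1_eq_prod (hf : ∀ a b, f (.node u a b) = f a * f b) (s : T F ar U)
    (ss : List (T F ar U)) : f (comb1 F ar U u s ss) = ((s :: ss).map f).prod := by
  induction ss generalizing s with
  | nil => rw [comb1, List.map_singleton, List.prod_cons, List.prod_nil, mul_one]
  | cons r rs ih => rw [comb1, hf, ih, List.map_cons (a := s), List.prod_cons]

end Multiplicative

/-- The congruence `EqACE E` as a setoid, used to form the quotient of the terms by it. -/
def EqACE.setoid (E : Set (T F ar U × T F ar U)) : Setoid (T F ar U) where
  r := EqACE F ar U E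
  iseqv := ⟨.refl, .symm, .trans⟩

/-- The semigroup of terms modulo `EqACE E`, multiplied by means of the AC symbol `u`. The symbol is
a parameter of the type so that each `u` has its own multiplication instance. -/
def EqACE.QuotSemigroup (E : Set (T F ar U × T F ar U)) (_u : U) : Type :=
  Quotient (EqACE.setoid E)

instance (E : Set (T F ar U × T F ar U)) (u : U) : CommSemigroup (EqACE.QuotSemigroup E u) where
  mul := Quotient.map₂ (T.node u) fun _ _ h₁ _ _ h₂ => .congr_node u h₁ h₂
  mul_assoc := by
    rintro ⟨x⟩ ⟨y⟩ ⟨z⟩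
    exact Quotient.sound (EqACE.assoc u x y z).symm
  mul_comm := by
    rintro ⟨x⟩ ⟨y⟩
    exact Quotient.sound (EqACE.comm u x y)

/-- The class of a term in the semigroup `EqACE.QuotSemigroup E u`, to which a unit is adjoined so
that products over multisets of classes are available. -/
def EqACE.termClass (E : Set (T F ar U × T F ar U)) (u : U) (t : T F ar U) :
    WithOne (EqACE.QuotSemigroup E u) :=
  WithOne.coe (Quotient.mk (EqACE.setoid E) t)

theorem EqACE.termClass_node (E : Set (T F ar U × T F ar U)) (u : U) (a b : T F ar U) :
    EqACE.termClass E u (.node u a b) = EqACE.termClass E u a * EqACE.termClass E u b := rfl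

theorem EqACE.of_termClass_eq {E : Set (T F ar U × T F ar U)} {u : U} {a b : T F ar U}
    (h : EqACE.termClass E u a = EqACE.termClass E u b) : EqACE F ar U E a b :=
  Quotient.exact (WithOne.coe_inj.mp h)

variable [LinearOrder (T F ar U)]

theorem exists_canAC_node_eq_comb1 (u : U) (a b : T F ar U) :
    ∃ s ss, (aliens F ar U u (canAC F ar U a) + aliens F ar U u (canAC F ar U b)).sort (· ≤ ·)
        = s :: ss ∧ canAC F ar U (.node u a b) = comb1 F ar U u s ss := by
  set A := aliens F ar U u (canAC F ar U a) + aliens F ar U u (canAC F ar U b) with hA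
  have hA₀ : A ≠ 0 := fun h => aliens_ne_zero u (canAC F ar U a) (add_eq_zero.mp h).1
  have hsort : A.sort (· ≤ ·) ≠ [] := fun h => hA₀ <| by
    rw [← A.sort_eq (· ≤ ·), h, Multiset.coe_nil]
  obtain ⟨s, ss, h⟩ := List.exists_cons_of_ne_nil hsort
  exact ⟨s, ss, h, by rw [canAC, ← hA, h]⟩

theorem canAC_node_congr (u : U) {a b c d : T F ar U}
    (h : aliens F ar U u (canAC F ar U a) + aliens F ar U u (canAC F ar U b) =
      aliens F ar U u (canAC F ar U c) + aliens F ar U u (canAC F ar U d)) :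
    canAC F ar U (.node u a b) = canAC F ar U (.node u c d) := by
  obtain ⟨s, ss, hab, eab⟩ := exists_canAC_node_eq_comb1 u a b
  obtain ⟨r, rs, hcd, ecd⟩ := exists_canAC_node_eq_comb1 u c d
  obtain ⟨rfl, rfl⟩ := List.cons.inj (hab.symm.trans (h ▸ hcd))
  exact eab.trans ecd.symm

@[to_additive]
theorem map_canAC_node_eq_mul {M : Type*} [CommMonoid M] {u : U} {f : T F ar U → M}
    (hf : ∀ a b, f (.node u a b) = f a * f b) (a b : T F ar U) :
    f (canAC F ar U (.node u a b)) = f (canAC F ar U a) * f (canAC F ar U b) := by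
  obtain ⟨s, ss, hsort, hcan⟩ := exists_canAC_node_eq_comb1 u a b
  calc
    f (canAC F ar U (.node u a b)) = ((s :: ss).map f).prod := by
      rw [hcan, map_comb1_eq_prod hf]
    _ = ((aliens F ar U u (canAC F ar U a) + aliens F ar U u (canAC F ar U b)).map f).prod := by
      rw [← hsort, ← Multiset.prod_coe, ← Multiset.map_coe, Multiset.sort_eq]
    _ = f (canAC F ar U a) * f (canAC F ar U b) := by
      rw [Multiset.map_add, Multiset.prod_add, prod_map_aliens hf, prod_map_aliens hf]

theorem aliens_canAC_node (u : U) (a b : T F ar U) :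
    aliens F ar U u (canAC F ar U (.node u a b)) =
      aliens F ar U u (canAC F ar U a) + aliens F ar U u (canAC F ar U b) :=
  map_canAC_node_eq_add (aliens_node_self u) a b

theorem ACeq.canAC_eq {s t : T F ar U} (h : ACeq F ar U s t) :
    canAC F ar U s = canAC F ar U t := by
  induction h with
  | ax h => exact absurd h (Set.notMem_empty _)
  | refl t => rfl
  | symm _ ih => exact ih.symm
  | trans _ _ ih₁ ih₂ => exact ih₁.trans ih₂
  | congr_app f ts ts' _ ih => simp only [canAC, ih]
  | congr_node u _ _ ih₁ ih₂ => exact canAC_node_congr u (by rw [ih₁, ih₂])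
  | comm u x y => exact canAC_node_congr u (add_comm _ _)
  | assoc u x y z =>
    exact canAC_node_congr u (by rw [aliens_canAC_node, aliens_canAC_node, add_assoc])

theorem canAC_eqACE (E : Set (T F ar U × T F ar U)) (t : T F ar U) :
    EqACE F ar U E (canAC F ar U t) t := by
  induction t with
  | app f ts ih =>
    rw [canAC]
    exact .congr_app f _ _ ih
  | node u a b iha ihb =>
    have hcan : EqACE F ar U E (canAC F ar U (.node u a b))
        (.node u (canAC F ar U a) (canAC F ar U b)) :=
      .of_termClass_eq (map_canAC_node_eq_mul (EqACE.termClass_node E u) a b)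
    exact hcan.trans (.congr_node u iha ihb)

end

/-- `can_AC` solves the word problem for AC. -/
theorem stmt4 [LinearOrder (T F ar U)] (s t : T F ar U) :
    canAC F ar U s = canAC F ar U t ↔ ACeq F ar U s t := by
  refine ⟨fun h => ?_, ACeq.canAC_eq⟩
  have hs : ACeq F ar U s (canAC F ar U t) := h ▸ (canAC_eqACE ∅ s).symm
  exact hs.trans (canAC_eqACE ∅ t)
end

section
/- Soundness of ground AC-completion (the soundness invariant, Theorem on soundness instantiated with the AC theory): fix an arbitrary binary relation ≺ on ground terms. For any configuration ⟨E, R⟩ reachable from the initial configuration ⟨E₀, ∅⟩ by finitely many applications of the inference rules Trivial, Orient, Simplify, Compose, Collapse and Deduce, every pair (s,t) in E ∪ R satisfies s =_{AC∪E₀} t. -/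
variable (F : Type) (ar : F → ℕ) (U : Type)

/-- Ground rewriting modulo AC with the rule `l → r` : `Rw l r s t` holds iff `s` rewrites
to `t` modulo AC by `l → r` at some position.  The first two constructors are the two kinds
of rewriting steps at the considered position (plain and extended), the last three close the
relation under all positions. -/
inductive Rw (l r : T F ar U) : T F ar U → T F ar U → Prop where
  | plain : ∀ {s : T F ar U}, ACeq F ar U s l → Rw l r s r
  | ext : ∀ (u : U) (l₁ l₂ : T F ar U) {s : T F ar U} (s' : T F ar U),
      l = .node u l₁ l₂ → ACeq F ar U s (.node u l s') → Rw l r s (.node u r s')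
  | congr_app : ∀ (f : F) (ts : Fin (ar f) → T F ar U) (i : Fin (ar f)) {t : T F ar U},
      Rw l r (ts i) t → Rw l r (.app f ts) (.app f (Function.update ts i t))
  | nodeL : ∀ (u : U) {s t : T F ar U} (w : T F ar U),
      Rw l r s t → Rw l r (.node u s w) (.node u t w)
  | nodeR : ∀ (u : U) (w : T F ar U) {s t : T F ar U},
      Rw l r s t → Rw l r (.node u w s) (.node u w t)

/-- `RwR R s t` : `s` rewrites to `t` modulo AC by some rule of `R`. -/
def RwR (R : Set (T F ar U × T F ar U)) (s t : T F ar U) : Prop :=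
  ∃ l r, (l, r) ∈ R ∧ Rw F ar U l r s t

/-- One inference step of ground AC-completion on configurations `⟨E, R⟩`,
parameterized by an ordering `prec` on ground terms. -/
inductive Step (prec : T F ar U → T F ar U → Prop) :
    Set (T F ar U × T F ar U) × Set (T F ar U × T F ar U) →
    Set (T F ar U × T F ar U) × Set (T F ar U × T F ar U) → Prop where
  | trivial : ∀ E R (s t : T F ar U), ACeq F ar U s t →
      Step prec (insert (s, t) E, R) (E, R)
  | orient : ∀ E R (s t : T F ar U), prec t s →
      Step prec (insert (s, t) E, R) (E, insert (s, t) R)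
  | simplify : ∀ E R (s s' t : T F ar U), RwR F ar U R s s' →
      Step prec (insert (s, t) E, R) (insert (s', t) E, R)
  | compose : ∀ E R (l r r' : T F ar U), RwR F ar U R r r' →
      Step prec (E, insert (l, r) R) (E, insert (l, r') R)
  | collapse : ∀ E R (g d l r l' : T F ar U), Rw F ar U g d l l' →
      Step prec (E, insert (g, d) (insert (l, r) R)) (insert (l', r) E, insert (g, d) R)
  | deduce : ∀ E R (u : U) (l r l' r' a b b' : T F ar U), (l, r) ∈ R → (l', r') ∈ R →
      ACeq F ar U l (.node u a b) → ACeq F ar U l' (.node u a b') →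
      Step prec (E, R) (insert (T.node u b r', T.node u b' r) E, R)

section

variable {F ar U} {E E' : Set (T F ar U × T F ar U)} {l r s t : T F ar U}

namespace EqACE

theorem mono (hE : E ⊆ E') (h : EqACE F ar U E s t) : EqACE F ar U E' s t := by
  induction h with
  | ax h => exact .ax (hE h)
  | refl t => exact .refl t
  | symm _ ih => exact .symm ih
  | trans _ _ ih₁ ih₂ => exact .trans ih₁ ih₂
  | congr_app f ts ts' _ ih => exact .congr_app f ts ts' ih
  | congr_node u _ _ ih₁ ih₂ => exact .congr_node u ih₁ ih₂
  | comm u x y => exact .comm u x y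
  | assoc u x y z => exact .assoc u x y z

theorem of_aceq (h : ACeq F ar U s t) : EqACE F ar U E s t :=
  h.mono (Set.empty_subset E)

instance : Trans (EqACE F ar U E) (EqACE F ar U E) (EqACE F ar U E) where
  trans := .trans

theorem app_update {f : F} {ts : Fin (ar f) → T F ar U} {i : Fin (ar f)}
    (h : EqACE F ar U E (ts i) t) :
    EqACE F ar U E (.app f ts) (.app f (Function.update ts i t)) :=
  .congr_app f _ _ <|
    (Function.forall_update_iff ts fun j x => EqACE F ar U E (ts j) x).2
      ⟨h, fun j _ => .refl (ts j)⟩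

theorem node_left (u : U) (w : T F ar U) (h : EqACE F ar U E s t) :
    EqACE F ar U E (.node u s w) (.node u t w) :=
  .congr_node u h (.refl w)

theorem node_right (u : U) (w : T F ar U) (h : EqACE F ar U E s t) :
    EqACE F ar U E (.node u w s) (.node u w t) :=
  .congr_node u (.refl w) h

theorem node_rotate (u : U) (x y z : T F ar U) :
    EqACE F ar U E (.node u x (.node u y z)) (.node u z (.node u y x)) :=
  calc
    EqACE F ar U E (.node u x (.node u y z)) (.node u (.node u x y) z) := .assoc u x y z
    EqACE F ar U E _ (.node u z (.node u x y)) := .comm u _ z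
    EqACE F ar U E _ (.node u z (.node u y x)) := .node_right u z (.comm u x y)

theorem critical_pair {u : U} {l' r' a b b' : T F ar U}
    (hlr : EqACE F ar U E l r) (hlr' : EqACE F ar U E l' r')
    (hl : EqACE F ar U E l (.node u a b)) (hl' : EqACE F ar U E l' (.node u a b')) :
    EqACE F ar U E (.node u b r') (.node u b' r) :=
  calc
    EqACE F ar U E (.node u b r') (.node u b (.node u a b')) :=
      .node_right u b (hlr'.symm.trans hl')
    EqACE F ar U E _ (.node u b' (.node u a b)) := .node_rotate u b a b'
    EqACE F ar U E _ (.node u b' r) := .node_right u b' (hl.symm.trans hlr)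

end EqACE

theorem Rw.eqACE (h : Rw F ar U l r s t) (hlr : EqACE F ar U E l r) : EqACE F ar U E s t := by
  induction h with
  | plain hs => exact (EqACE.of_aceq hs).trans hlr
  | ext u _ _ s' _ hs => exact (EqACE.of_aceq hs).trans (hlr.node_left u s')
  | congr_app _ _ _ _ ih => exact ih.app_update
  | nodeL u w _ ih => exact ih.node_left u w
  | nodeR u w _ ih => exact ih.node_right u w

/-- The equational theory of `E` modulo AC: the congruence `=_{AC∪E}` as a set of pairs, so that
validity of a set of equations or rules is an inclusion. -/
def equationalTheory (E : Set (T F ar U × T F ar U)) : Set (T F ar U × T F ar U) :=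
  {p | EqACE F ar U E p.1 p.2}

theorem subset_equationalTheory : E ⊆ equationalTheory E :=
  fun _ => .ax

theorem RwR.eqACE {R : Set (T F ar U × T F ar U)} (h : RwR F ar U R s t)
    (hR : R ⊆ equationalTheory E) : EqACE F ar U E s t :=
  let ⟨_, _, hlr, hst⟩ := h
  hst.eqACE (hR hlr)

variable {prec : T F ar U → T F ar U → Prop}
  {c c' : Set (T F ar U × T F ar U) × Set (T F ar U × T F ar U)}

theorem Step.subset_equationalTheory (h : Step F ar U prec c c')
    (hc : c.1 ∪ c.2 ⊆ equationalTheory E) : c'.1 ∪ c'.2 ⊆ equationalTheory E := by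
  cases h <;> simp only [Set.union_subset_iff, Set.insert_subset_iff] at hc ⊢
  case trivial =>
    obtain ⟨⟨_, hE⟩, hR⟩ := hc
    exact ⟨hE, hR⟩
  case orient =>
    obtain ⟨⟨hst, hE⟩, hR⟩ := hc
    exact ⟨hE, hst, hR⟩
  case simplify hss' =>
    obtain ⟨⟨hst, hE⟩, hR⟩ := hc
    exact ⟨⟨(hss'.eqACE hR).symm.trans hst, hE⟩, hR⟩
  case compose hrr' =>
    obtain ⟨hE, hlr, hR⟩ := hc
    exact ⟨hE, hlr.trans (hrr'.eqACE hR), hR⟩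
  case collapse hll' =>
    obtain ⟨hE, hgd, hlr, hR⟩ := hc
    exact ⟨⟨(hll'.eqACE hgd).symm.trans hlr, hE⟩, hgd, hR⟩
  case deduce hlr hlr' hl hl' =>
    obtain ⟨hE, hR⟩ := hc
    exact ⟨⟨.critical_pair (hR hlr) (hR hlr') (.of_aceq hl) (.of_aceq hl'), hE⟩, hR⟩

theorem stmt13_general (h : Relation.ReflTransGen (Step F ar U prec) c c') :
    c'.1 ∪ c'.2 ⊆ equationalTheory (c.1 ∪ c.2) := by
  induction h with
  | refl => exact subset_equationalTheory
  | tail _ hstep ih => exact hstep.subset_equationalTheory ih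

end

/-- Soundness of ground AC-completion: every equation or rule of a configuration
reachable from `⟨E₀, ∅⟩` is a consequence of `E₀` modulo AC. -/
theorem stmt13 (prec : T F ar U → T F ar U → Prop)
    (E₀ E R : Set (T F ar U × T F ar U))
    (h : Relation.ReflTransGen (Step F ar U prec) (E₀, ∅) (E, R))
    (s t : T F ar U) (hst : (s, t) ∈ E ∪ R) :
    EqACE F ar U E₀ s t := by
  rw [← Set.union_empty E₀]
  exact stmt13_general h hst
end
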